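/- arXiv:0907.1000 — 2 statements merged into one kernel-verified Lean document; each statement's English description precedes it below -/
import Mathlib

section
/- Let Ω ⊆ ℝ² be open, let ε > 0, and let w : Ω × ℝ → ℂ, B : Ω × ℝ → ℝ², ξ : Ω × ℝ → ℝ be smooth (not necessarily solutions of any equation). Then the Ginzburg-Landau energy density satisfies, pointwise on Ω × ℝ: ∂_t g⁰_ε(w,B) = div(∂_ξ w, ∇_B w) + curl((curl B)(∂_t B + ∇ξ)) − (∂_ξ w, Δ_B w + (w/ε²)(1−|w|²)) − (∂_t B + ∇ξ) · (∇^⊥ curl B + (iw, ∇_B w)), where div(∂_ξ w, ∇_B w) denotes the divergence of the ℝ²-valued field with components (∂_ξ w, ∂_j^B w). -/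
noncomputable section

open Complex

/-- Real inner product of two complex numbers: `(a,b) = Re a · Re b + Im a · Im b`. -/
def rip (a b : ℂ) : ℝ := a.re * b.re + a.im * b.im

/-- `(a, X)` for `a : ℂ` and `X : ℂ²`: the vector in `ℝ²` with components `(a,X₁)`, `(a,X₂)`. -/
def ripv (a : ℂ) (X : ℂ × ℂ) : ℝ × ℝ := (rip a X.1, rip a X.2)

/-- Dot product of `X : ℂ²` with `Z : ℝ²`: `X·Z = X₁Z₁ + X₂Z₂ ∈ ℂ`. -/
def cdotR (X : ℂ × ℂ) (Z : ℝ × ℝ) : ℂ := X.1 * (Z.1 : ℂ) + X.2 * (Z.2 : ℂ)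

/-- Euclidean dot product on `ℝ²`. -/
def rdot (a b : ℝ × ℝ) : ℝ := a.1 * b.1 + a.2 * b.2

/-- Perpendicular of a vector: `Z^⊥ = (−Z₂, Z₁)`. -/
def perp (a : ℝ × ℝ) : ℝ × ℝ := (-a.2, a.1)

/-! ### Spatial differential operators for functions on `ℝ²` -/

/-- First spatial partial derivative `∂₁`. -/
def pd1 {E : Type*} [NormedAddCommGroup E] [NormedSpace ℝ E]
    (f : ℝ × ℝ → E) (x : ℝ × ℝ) : E := fderiv ℝ f x (1, 0)

/-- Second spatial partial derivative `∂₂`. -/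
def pd2 {E : Type*} [NormedAddCommGroup E] [NormedSpace ℝ E]
    (f : ℝ × ℝ → E) (x : ℝ × ℝ) : E := fderiv ℝ f x (0, 1)

/-- Gradient `∇g = (∂₁g, ∂₂g)`. -/
def sgrad (g : ℝ × ℝ → ℝ) (x : ℝ × ℝ) : ℝ × ℝ := (pd1 g x, pd2 g x)

/-- Perpendicular gradient `∇^⊥ g = (−∂₂g, ∂₁g)`. -/
def sgradPerp (g : ℝ × ℝ → ℝ) (x : ℝ × ℝ) : ℝ × ℝ := (-(pd2 g x), pd1 g x)

/-- Laplacian `Δg = ∂₁∂₁g + ∂₂∂₂g`. -/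
def slap (g : ℝ × ℝ → ℝ) (x : ℝ × ℝ) : ℝ := pd1 (pd1 g) x + pd2 (pd2 g) x

/-- Curl of a vector field: `curl X = ∂₁X₂ − ∂₂X₁`. -/
def scurl (X : ℝ × ℝ → ℝ × ℝ) (x : ℝ × ℝ) : ℝ := (pd1 X x).2 - (pd2 X x).1

/-- Divergence of a vector field: `div X = ∂₁X₁ + ∂₂X₂`. -/
def sdiv (X : ℝ × ℝ → ℝ × ℝ) (x : ℝ × ℝ) : ℝ := (pd1 X x).1 + (pd2 X x).2

/-- Covariant partial derivative `∂₁^A u = ∂₁u − iA₁u`. -/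
def cpd1 (A : ℝ × ℝ → ℝ × ℝ) (u : ℝ × ℝ → ℂ) (x : ℝ × ℝ) : ℂ :=
  pd1 u x - Complex.I * ((A x).1 : ℂ) * u x

/-- Covariant partial derivative `∂₂^A u = ∂₂u − iA₂u`. -/
def cpd2 (A : ℝ × ℝ → ℝ × ℝ) (u : ℝ × ℝ → ℂ) (x : ℝ × ℝ) : ℂ :=
  pd2 u x - Complex.I * ((A x).2 : ℂ) * u x

/-- Covariant gradient `∇_A u = ∇u − iAu`. -/
def covGrad (A : ℝ × ℝ → ℝ × ℝ) (u : ℝ × ℝ → ℂ) (x : ℝ × ℝ) : ℂ × ℂ :=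
  (cpd1 A u x, cpd2 A u x)

/-- Covariant Laplacian `Δ_A u = ∂₁^A ∂₁^A u + ∂₂^A ∂₂^A u`. -/
def covLap (A : ℝ × ℝ → ℝ × ℝ) (u : ℝ × ℝ → ℂ) (x : ℝ × ℝ) : ℂ :=
  cpd1 A (cpd1 A u) x + cpd2 A (cpd2 A u) x

/-- Vorticity `μ(u,A) = curl((iu, ∇_A u) + A)`. -/
def svort (u : ℝ × ℝ → ℂ) (A : ℝ × ℝ → ℝ × ℝ) (x : ℝ × ℝ) : ℝ :=
  scurl (fun y => ripv (Complex.I * u y) (covGrad A u y) + A y) x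

/-- Ginzburg–Landau energy density
`g⁰_ε(u,A) = ½(|∇_A u|² + (1−|u|²)²/(2ε²) + (curl A)²)`. -/
def glEnergy (ε : ℝ) (u : ℝ × ℝ → ℂ) (A : ℝ × ℝ → ℝ × ℝ) (x : ℝ × ℝ) : ℝ :=
  (1 / 2) * (Complex.normSq (cpd1 A u x) + Complex.normSq (cpd2 A u x)
    + (1 - Complex.normSq (u x)) ^ 2 / (2 * ε ^ 2) + (scurl A x) ^ 2)

/-! ### Space-time differential operators for functions on `ℝ² × ℝ`
(spatial operators act in the spatial variables, `tdt` is the time derivative) -/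

/-- First spatial partial derivative `∂₁`. -/
def sp1 {E : Type*} [NormedAddCommGroup E] [NormedSpace ℝ E]
    (f : (ℝ × ℝ) × ℝ → E) (z : (ℝ × ℝ) × ℝ) : E := fderiv ℝ f z ((1, 0), 0)

/-- Second spatial partial derivative `∂₂`. -/
def sp2 {E : Type*} [NormedAddCommGroup E] [NormedSpace ℝ E]
    (f : (ℝ × ℝ) × ℝ → E) (z : (ℝ × ℝ) × ℝ) : E := fderiv ℝ f z ((0, 1), 0)

/-- Time derivative `∂_t`. -/
def tdt {E : Type*} [NormedAddCommGroup E] [NormedSpace ℝ E]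
    (f : (ℝ × ℝ) × ℝ → E) (z : (ℝ × ℝ) × ℝ) : E := fderiv ℝ f z ((0, 0), 1)

/-- Spatial gradient. -/
def tgrad (g : (ℝ × ℝ) × ℝ → ℝ) (z : (ℝ × ℝ) × ℝ) : ℝ × ℝ := (sp1 g z, sp2 g z)

/-- Spatial perpendicular gradient `∇^⊥ g = (−∂₂g, ∂₁g)`. -/
def tgradPerp (g : (ℝ × ℝ) × ℝ → ℝ) (z : (ℝ × ℝ) × ℝ) : ℝ × ℝ := (-(sp2 g z), sp1 g z)

/-- Spatial Laplacian. -/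
def tlap (g : (ℝ × ℝ) × ℝ → ℝ) (z : (ℝ × ℝ) × ℝ) : ℝ := sp1 (sp1 g) z + sp2 (sp2 g) z

/-- Spatial curl of a time-dependent vector field. -/
def tcurl (X : (ℝ × ℝ) × ℝ → ℝ × ℝ) (z : (ℝ × ℝ) × ℝ) : ℝ := (sp1 X z).2 - (sp2 X z).1

/-- Spatial divergence of a time-dependent vector field. -/
def tdiv (X : (ℝ × ℝ) × ℝ → ℝ × ℝ) (z : (ℝ × ℝ) × ℝ) : ℝ := (sp1 X z).1 + (sp2 X z).2

/-- Covariant partial derivative `∂₁^B w = ∂₁w − iB₁w`. -/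
def tcpd1 (B : (ℝ × ℝ) × ℝ → ℝ × ℝ) (w : (ℝ × ℝ) × ℝ → ℂ) (z : (ℝ × ℝ) × ℝ) : ℂ :=
  sp1 w z - Complex.I * ((B z).1 : ℂ) * w z

/-- Covariant partial derivative `∂₂^B w = ∂₂w − iB₂w`. -/
def tcpd2 (B : (ℝ × ℝ) × ℝ → ℝ × ℝ) (w : (ℝ × ℝ) × ℝ → ℂ) (z : (ℝ × ℝ) × ℝ) : ℂ :=
  sp2 w z - Complex.I * ((B z).2 : ℂ) * w z

/-- Covariant gradient `∇_B w = ∇w − iBw` (spatial). -/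
def tcovGrad (B : (ℝ × ℝ) × ℝ → ℝ × ℝ) (w : (ℝ × ℝ) × ℝ → ℂ) (z : (ℝ × ℝ) × ℝ) : ℂ × ℂ :=
  (tcpd1 B w z, tcpd2 B w z)

/-- Covariant Laplacian `Δ_B w`. -/
def tcovLap (B : (ℝ × ℝ) × ℝ → ℝ × ℝ) (w : (ℝ × ℝ) × ℝ → ℂ) (z : (ℝ × ℝ) × ℝ) : ℂ :=
  tcpd1 B (tcpd1 B w) z + tcpd2 B (tcpd2 B w) z

/-- Covariant time derivative `∂_ξ w = ∂_t w + iξw`. -/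
def covt (ξ : (ℝ × ℝ) × ℝ → ℝ) (w : (ℝ × ℝ) × ℝ → ℂ) (z : (ℝ × ℝ) × ℝ) : ℂ :=
  tdt w z + Complex.I * (ξ z : ℂ) * w z

/-- Vorticity `μ(w,B) = curl((iw, ∇_B w) + B)`. -/
def tvort (w : (ℝ × ℝ) × ℝ → ℂ) (B : (ℝ × ℝ) × ℝ → ℝ × ℝ) (z : (ℝ × ℝ) × ℝ) : ℝ :=
  tcurl (fun y => ripv (Complex.I * w y) (tcovGrad B w y) + B y) z

/-- Velocity `V(w,B,ξ) = ∇(iw,∂_ξ w) − ∂_t(iw,∇_B w) − (∂_t B + ∇ξ)`. -/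
def tvel (w : (ℝ × ℝ) × ℝ → ℂ) (B : (ℝ × ℝ) × ℝ → ℝ × ℝ) (ξ : (ℝ × ℝ) × ℝ → ℝ)
    (z : (ℝ × ℝ) × ℝ) : ℝ × ℝ :=
  tgrad (fun y => rip (Complex.I * w y) (covt ξ w y)) z
    - tdt (fun y => ripv (Complex.I * w y) (tcovGrad B w y)) z
    - (tdt B z + tgrad ξ z)

/-- Time-dependent Ginzburg–Landau energy density. -/
def tglEnergy (ε : ℝ) (w : (ℝ × ℝ) × ℝ → ℂ) (B : (ℝ × ℝ) × ℝ → ℝ × ℝ)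
    (z : (ℝ × ℝ) × ℝ) : ℝ :=
  (1 / 2) * (Complex.normSq (tcpd1 B w z) + Complex.normSq (tcpd2 B w z)
    + (1 - Complex.normSq (w z)) ^ 2 / (2 * ε ^ 2) + (tcurl B z) ^ 2)

/-!
The connection `B` in space and the potential `-ξ` in time form one connection on space-time:
`∂_j^B` and `∂_ξ` are its covariant derivatives along the coordinate directions. They satisfy the
Leibniz rule `∂_v (f, g) = (D_v f, g) + (f, D_v g)`, and the commutator of `∂_ξ` and `∂_j^B` is
multiplication by `-i (∂_t B_j + ∂_j ξ)`. Hence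
`∂_t ½|∂_j^B w|² = (∂_j^B ∂_ξ w, ∂_j^B w) - (∂_t B_j + ∂_j ξ) (iw, ∂_j^B w)`,
and a second use of the Leibniz rule turns the first term on the right into a divergence. The
magnetic energy is treated in the same way, starting from `∂_t curl B = curl (∂_t B + ∇ξ)`.
-/

lemma rip_eq_inner (a b : ℂ) : rip a b = inner ℝ a b := by
  rw [Complex.inner, rip, mul_re, conj_re, conj_im]
  ring

lemma normSq_eq_rip (a : ℂ) : normSq a = rip a a := normSq_apply a

lemma rip_add_right (a b c : ℂ) : rip a (b + c) = rip a b + rip a c := by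
  simp only [rip_eq_inner, inner_add_right]

lemma rdot_add_right (a b c : ℝ × ℝ) : rdot a (b + c) = rdot a b + rdot a c := by
  simp only [rdot, Prod.fst_add, Prod.snd_add]
  ring

section SecondDerivative

variable {𝕜 V E : Type*} [NontriviallyNormedField 𝕜] [NormedAddCommGroup V] [NormedSpace 𝕜 V]
  [NormedAddCommGroup E] [NormedSpace 𝕜 E] {f : V → E} {x : V}

lemma differentiableAt_fderiv_apply (hf : ContDiffAt 𝕜 2 f x) (v : V) :
    DifferentiableAt 𝕜 (fun y => fderiv 𝕜 f y v) x :=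
  ((hf.fderiv_right (m := 1) (by norm_num)).differentiableAt one_ne_zero).clm_apply
    (differentiableAt_const v)

lemma fderiv_fderiv_apply_comm {n : WithTop ℕ∞} (hf : ContDiffAt 𝕜 n f x)
    (hn : minSmoothness 𝕜 2 ≤ n) (u v : V) :
    fderiv 𝕜 (fun y => fderiv 𝕜 f y v) x u = fderiv 𝕜 (fun y => fderiv 𝕜 f y u) x v := by
  have hbracket := VectorField.fderiv_apply_lieBracket_of_isSymmSndFDerivAt
    (hf.of_le (le_minSmoothness.trans hn)) (hf.isSymmSndFDerivAt hn)
    (differentiableAt_const v) (differentiableAt_const u)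
  rw [← sub_eq_zero, ← hbracket]
  simp [VectorField.lieBracket]

end SecondDerivative

section CovariantDerivative

variable {V : Type*} [NormedAddCommGroup V] [NormedSpace ℝ V]
  {a b : V → ℝ} {f g : V → ℂ} {x : V}

/-- The covariant derivative `D_v f = ∂_v f - i a f` in the direction `v`, where `a` is the
component of the connection in that direction. -/
def covDeriv (a : V → ℝ) (v : V) (f : V → ℂ) (x : V) : ℂ :=
  fderiv ℝ f x v - I * (a x : ℂ) * f x

lemma differentiableAt_rip (hf : DifferentiableAt ℝ f x) (hg : DifferentiableAt ℝ g x) :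
    DifferentiableAt ℝ (fun y => rip (f y) (g y)) x := by
  simp only [rip_eq_inner]
  exact hf.inner ℝ hg

lemma differentiableAt_normSq (hf : DifferentiableAt ℝ f x) :
    DifferentiableAt ℝ (fun y => normSq (f y)) x := by
  simp only [normSq_eq_rip]
  exact differentiableAt_rip hf hf

lemma hasFDerivAt_covDeriv (hf : ContDiffAt ℝ 2 f x) (ha : DifferentiableAt ℝ a x) (v : V) :
    HasFDerivAt (covDeriv a v f)
      (fderiv ℝ (fun y => fderiv ℝ f y v) x
        - ((I * (a x : ℂ)) • fderiv ℝ f x + f x • (I • ofRealCLM.comp (fderiv ℝ a x)))) x :=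
  (differentiableAt_fderiv_apply hf v).hasFDerivAt.sub
    (((ofRealCLM.hasFDerivAt.comp x ha.hasFDerivAt).const_mul I).mul
      (hf.differentiableAt two_ne_zero).hasFDerivAt)

lemma differentiableAt_covDeriv (hf : ContDiffAt ℝ 2 f x) (ha : DifferentiableAt ℝ a x) (v : V) :
    DifferentiableAt ℝ (covDeriv a v f) x :=
  (hasFDerivAt_covDeriv hf ha v).differentiableAt

lemma covDeriv_covDeriv_comm (hf : ContDiffAt ℝ 2 f x) (ha : DifferentiableAt ℝ a x)
    (hb : DifferentiableAt ℝ b x) (u v : V) :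
    covDeriv a u (covDeriv b v f) x = covDeriv b v (covDeriv a u f) x
      - I * ((fderiv ℝ b x u - fderiv ℝ a x v : ℝ) : ℂ) * f x := by
  have hsymm := fderiv_fderiv_apply_comm hf (by simp) u v
  rw [covDeriv, (hasFDerivAt_covDeriv hf hb v).fderiv, covDeriv.eq_def b v (covDeriv a u f),
    (hasFDerivAt_covDeriv hf ha u).fderiv]
  simp only [covDeriv, sub_apply, add_apply, smul_apply, smul_eq_mul,
    ContinuousLinearMap.comp_apply, ofRealCLM_apply, ofReal_sub, hsymm]
  ring

-- The connection drops out because `(iaf, g) + (f, iag) = 0` for real `a`.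
lemma fderiv_rip_apply (hf : DifferentiableAt ℝ f x) (hg : DifferentiableAt ℝ g x)
    (a : V → ℝ) (v : V) :
    fderiv ℝ (fun y => rip (f y) (g y)) x v
      = rip (covDeriv a v f x) (g x) + rip (f x) (covDeriv a v g x) := by
  have hleibniz : fderiv ℝ (fun y => rip (f y) (g y)) x v
      = rip (f x) (fderiv ℝ g x v) + rip (fderiv ℝ f x v) (g x) := by
    simp only [rip_eq_inner]
    exact fderiv_inner_apply ℝ hf hg v
  rw [hleibniz]
  simp only [rip, covDeriv, sub_re, sub_im, mul_re, mul_im, I_re, I_im, ofReal_re, ofReal_im]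
  ring

lemma fderiv_normSq_apply (hf : DifferentiableAt ℝ f x) (a : V → ℝ) (v : V) :
    fderiv ℝ (fun y => normSq (f y)) x v = 2 * rip (covDeriv a v f x) (f x) := by
  simp only [normSq_eq_rip]
  rw [fderiv_rip_apply hf hf a v]
  simp only [rip]
  ring

lemma fderiv_normSq_covDeriv_apply (hf : ContDiffAt ℝ 2 f x) (ha : DifferentiableAt ℝ a x)
    (hb : DifferentiableAt ℝ b x) (u v : V) :
    fderiv ℝ (fun y => normSq (covDeriv b v f y)) x u
      = 2 * (fderiv ℝ (fun y => rip (covDeriv a u f y) (covDeriv b v f y)) x v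
          - rip (covDeriv a u f x) (covDeriv b v (covDeriv b v f) x)
          - (fderiv ℝ b x u - fderiv ℝ a x v) * rip (I * f x) (covDeriv b v f x)) := by
  have hu := differentiableAt_covDeriv hf ha u
  have hv := differentiableAt_covDeriv hf hb v
  rw [fderiv_normSq_apply hv a u, covDeriv_covDeriv_comm hf ha hb u v, fderiv_rip_apply hu hv b v]
  simp only [rip, sub_re, sub_im, mul_re, mul_im, I_re, I_im, ofReal_re, ofReal_im]
  ring

lemma hasFDerivAt_doubleWell (hf : DifferentiableAt ℝ f x) (ε : ℝ) :
    HasFDerivAt (fun y => (1 - normSq (f y)) ^ 2 / (2 * ε ^ 2))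
      (-((1 - normSq (f x)) / ε ^ 2) • fderiv ℝ (fun y => normSq (f y)) x) x := by
  refine ((((differentiableAt_normSq hf).hasFDerivAt.const_sub 1).pow 2).mul_const
    (2 * ε ^ 2)⁻¹).congr_fderiv ?_
  ext v
  simp only [mul_inv_rev, Nat.add_one_sub_one, pow_one, nsmul_eq_mul, Nat.cast_ofNat, smul_neg,
    neg_smul, neg_apply, smul_apply, smul_eq_mul]
  ring

lemma fderiv_doubleWell_apply (hf : DifferentiableAt ℝ f x) (ε : ℝ) (a : V → ℝ) (v : V) :
    fderiv ℝ (fun y => (1 - normSq (f y)) ^ 2 / (2 * ε ^ 2)) x v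
      = -2 * rip (covDeriv a v f x) (f x / (ε ^ 2 : ℂ) * (1 - (normSq (f x) : ℂ))) := by
  have hforce : f x / (ε ^ 2 : ℂ) * (1 - (normSq (f x) : ℂ))
      = ((1 - normSq (f x)) / ε ^ 2 : ℝ) • f x := by
    rw [real_smul]
    push_cast
    ring
  rw [(hasFDerivAt_doubleWell hf ε).fderiv, hforce, rip_eq_inner, real_inner_smul_right,
    ← rip_eq_inner]
  simp only [smul_apply, smul_eq_mul, fderiv_normSq_apply hf a v]
  ring

end CovariantDerivative

section SpaceTime

variable {w : (ℝ × ℝ) × ℝ → ℂ} {B X : (ℝ × ℝ) × ℝ → ℝ × ℝ} {ξ g h : (ℝ × ℝ) × ℝ → ℝ}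
  {z : (ℝ × ℝ) × ℝ}

lemma tcpd1_eq_covDeriv (B : (ℝ × ℝ) × ℝ → ℝ × ℝ) (w : (ℝ × ℝ) × ℝ → ℂ) :
    tcpd1 B w = covDeriv (fun y => (B y).1) ((1, 0), 0) w := rfl

lemma tcpd2_eq_covDeriv (B : (ℝ × ℝ) × ℝ → ℝ × ℝ) (w : (ℝ × ℝ) × ℝ → ℂ) :
    tcpd2 B w = covDeriv (fun y => (B y).2) ((0, 1), 0) w := rfl

lemma covt_eq_covDeriv (ξ : (ℝ × ℝ) × ℝ → ℝ) (w : (ℝ × ℝ) × ℝ → ℂ) :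
    covt ξ w = covDeriv (-ξ) ((0, 0), 1) w := by
  funext y
  simp [covt, tdt, covDeriv]

lemma tdiv_prodMk (hg : DifferentiableAt ℝ g z) (hh : DifferentiableAt ℝ h z) :
    tdiv (fun y => (g y, h y)) z = sp1 g z + sp2 h z := by
  simp [tdiv, sp1, sp2, hg.fderiv_prodMk hh]

lemma tcurl_prodMk (hg : DifferentiableAt ℝ g z) (hh : DifferentiableAt ℝ h z) :
    tcurl (fun y => (g y, h y)) z = sp1 h z - sp2 g z := by
  simp [tcurl, sp1, sp2, hg.fderiv_prodMk hh]

lemma tcurl_add (hB : DifferentiableAt ℝ B z) (hX : DifferentiableAt ℝ X z) :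
    tcurl (fun y => B y + X y) z = tcurl B z + tcurl X z := by
  simp only [tcurl, sp1, sp2, fderiv_fun_add hB hX, add_apply, Prod.fst_add, Prod.snd_add]
  ring

lemma tcurl_smul (hg : DifferentiableAt ℝ g z) (hX : DifferentiableAt ℝ X z) :
    tcurl (fun y => g y • X y) z = g z * tcurl X z + rdot (X z) (tgradPerp g z) := by
  simp only [tcurl, rdot, tgradPerp, sp1, sp2, fderiv_fun_smul hg hX, add_apply, smul_apply,
    ContinuousLinearMap.smulRight_apply, Prod.fst_add, Prod.snd_add, Prod.smul_fst, Prod.smul_snd,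
    smul_eq_mul]
  ring

lemma differentiableAt_tdt (hB : ContDiffAt ℝ 2 B z) : DifferentiableAt ℝ (tdt B) z :=
  differentiableAt_fderiv_apply hB ((0, 0), 1)

lemma differentiableAt_tgrad (hξ : ContDiffAt ℝ 2 ξ z) : DifferentiableAt ℝ (tgrad ξ) z :=
  (differentiableAt_fderiv_apply hξ ((1, 0), 0)).prodMk
    (differentiableAt_fderiv_apply hξ ((0, 1), 0))

lemma differentiableAt_tcurl (hB : ContDiffAt ℝ 2 B z) : DifferentiableAt ℝ (tcurl B) z :=
  (differentiableAt_fderiv_apply hB ((1, 0), 0)).snd.sub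
    (differentiableAt_fderiv_apply hB ((0, 1), 0)).fst

lemma tcurl_tgrad (hξ : ContDiffAt ℝ 2 ξ z) : tcurl (tgrad ξ) z = 0 :=
  (tcurl_prodMk (differentiableAt_fderiv_apply hξ ((1, 0), 0))
    (differentiableAt_fderiv_apply hξ ((0, 1), 0))).trans
    (sub_eq_zero.2 (fderiv_fderiv_apply_comm hξ (by simp) _ _))

lemma tdt_tcurl (hB : ContDiffAt ℝ 2 B z) : tdt (tcurl B) z = tcurl (tdt B) z := by
  have h1 := differentiableAt_fderiv_apply hB ((1, 0), 0)
  have h2 := differentiableAt_fderiv_apply hB ((0, 1), 0)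
  have hcurl : HasFDerivAt (tcurl B) _ z := h1.hasFDerivAt.snd.sub h2.hasFDerivAt.fst
  rw [tdt, hcurl.fderiv]
  simp [tcurl, sp1, sp2, funext (tdt.eq_def B), fderiv_fderiv_apply_comm hB _ ((0, 0), 1)]

lemma tdt_tcurl_eq_tcurl_tdt_add_tgrad (hB : ContDiffAt ℝ 2 B z) (hξ : ContDiffAt ℝ 2 ξ z) :
    tdt (tcurl B) z = tcurl (fun y => tdt B y + tgrad ξ y) z := by
  rw [tcurl_add (differentiableAt_tdt hB) (differentiableAt_tgrad hξ), tcurl_tgrad hξ, add_zero,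
    tdt_tcurl hB]

lemma tdt_tcurl_sq (hB : ContDiffAt ℝ 2 B z) (hξ : ContDiffAt ℝ 2 ξ z) :
    tdt (fun y => tcurl B y ^ 2) z
      = 2 * (tcurl (fun y => tcurl B y • (tdt B y + tgrad ξ y)) z
          - rdot (tdt B z + tgrad ξ z) (tgradPerp (tcurl B) z)) := by
  have hcurl := differentiableAt_tcurl hB
  have hchain : tdt (fun y => tcurl B y ^ 2) z = 2 * (tcurl B z * tdt (tcurl B) z) := by
    simp only [tdt, fderiv_fun_pow 2 hcurl, Nat.add_one_sub_one, pow_one, nsmul_eq_mul,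
      Nat.cast_ofNat, smul_apply, smul_eq_mul]
    ring
  rw [hchain, tdt_tcurl_eq_tcurl_tdt_add_tgrad hB hξ,
    tcurl_smul hcurl ((differentiableAt_tdt hB).fun_add (differentiableAt_tgrad hξ)),
    add_sub_cancel_right]

lemma differentiableAt_tcpd1 (hw : ContDiffAt ℝ 2 w z) (hB : DifferentiableAt ℝ B z) :
    DifferentiableAt ℝ (tcpd1 B w) z :=
  differentiableAt_covDeriv hw hB.fst _

lemma differentiableAt_tcpd2 (hw : ContDiffAt ℝ 2 w z) (hB : DifferentiableAt ℝ B z) :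
    DifferentiableAt ℝ (tcpd2 B w) z :=
  differentiableAt_covDeriv hw hB.snd _

lemma differentiableAt_covt (hw : ContDiffAt ℝ 2 w z) (hξ : DifferentiableAt ℝ ξ z) :
    DifferentiableAt ℝ (covt ξ w) z := by
  rw [covt_eq_covDeriv]
  exact differentiableAt_covDeriv hw hξ.neg _

lemma tdt_normSq_tcpd1 (hw : ContDiffAt ℝ 2 w z) (hB : DifferentiableAt ℝ B z)
    (hξ : DifferentiableAt ℝ ξ z) :
    tdt (fun y => normSq (tcpd1 B w y)) z
      = 2 * (sp1 (fun y => rip (covt ξ w y) (tcpd1 B w y)) z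
          - rip (covt ξ w z) (tcpd1 B (tcpd1 B w) z)
          - (tdt B z + tgrad ξ z).1 * rip (I * w z) (tcpd1 B w z)) := by
  have henergy := fderiv_normSq_covDeriv_apply hw hξ.neg hB.fst ((0, 0), 1) ((1, 0), 0)
  simpa [tdt, sp1, tgrad, covt_eq_covDeriv, tcpd1_eq_covDeriv, fderiv.fst hB, fderiv_neg]
    using henergy

lemma tdt_normSq_tcpd2 (hw : ContDiffAt ℝ 2 w z) (hB : DifferentiableAt ℝ B z)
    (hξ : DifferentiableAt ℝ ξ z) :
    tdt (fun y => normSq (tcpd2 B w y)) z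
      = 2 * (sp2 (fun y => rip (covt ξ w y) (tcpd2 B w y)) z
          - rip (covt ξ w z) (tcpd2 B (tcpd2 B w) z)
          - (tdt B z + tgrad ξ z).2 * rip (I * w z) (tcpd2 B w z)) := by
  have henergy := fderiv_normSq_covDeriv_apply hw hξ.neg hB.snd ((0, 0), 1) ((0, 1), 0)
  simpa [tdt, sp2, tgrad, covt_eq_covDeriv, tcpd2_eq_covDeriv, fderiv.snd hB, fderiv_neg]
    using henergy

lemma tdt_normSq_tcpd1_add_tdt_normSq_tcpd2 (hw : ContDiffAt ℝ 2 w z)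
    (hB : DifferentiableAt ℝ B z) (hξ : DifferentiableAt ℝ ξ z) :
    tdt (fun y => normSq (tcpd1 B w y)) z + tdt (fun y => normSq (tcpd2 B w y)) z
      = 2 * (tdiv (fun y => ripv (covt ξ w y) (tcovGrad B w y)) z
          - rip (covt ξ w z) (tcovLap B w z)
          - rdot (tdt B z + tgrad ξ z) (ripv (I * w z) (tcovGrad B w z))) := by
  have ht := differentiableAt_covt hw hξ
  have hdiv : tdiv (fun y => ripv (covt ξ w y) (tcovGrad B w y)) z
      = sp1 (fun y => rip (covt ξ w y) (tcpd1 B w y)) z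
        + sp2 (fun y => rip (covt ξ w y) (tcpd2 B w y)) z :=
    tdiv_prodMk (differentiableAt_rip ht (differentiableAt_tcpd1 hw hB))
      (differentiableAt_rip ht (differentiableAt_tcpd2 hw hB))
  rw [tdt_normSq_tcpd1 hw hB hξ, tdt_normSq_tcpd2 hw hB hξ, hdiv, tcovLap, rip_add_right]
  simp only [rdot, ripv, tcovGrad]
  ring

lemma tdt_doubleWell (hw : DifferentiableAt ℝ w z) (ε : ℝ) (ξ : (ℝ × ℝ) × ℝ → ℝ) :
    tdt (fun y => (1 - normSq (w y)) ^ 2 / (2 * ε ^ 2)) z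
      = -2 * rip (covt ξ w z) (w z / (ε ^ 2 : ℂ) * (1 - (normSq (w z) : ℂ))) := by
  rw [covt_eq_covDeriv]
  exact fderiv_doubleWell_apply hw ε _ _

lemma tdt_tglEnergy (hw : ContDiffAt ℝ 2 w z) (hB : ContDiffAt ℝ 2 B z) (ε : ℝ) :
    tdt (tglEnergy ε w B) z
      = (1 / 2) * (tdt (fun y => normSq (tcpd1 B w y)) z + tdt (fun y => normSq (tcpd2 B w y)) z
          + tdt (fun y => (1 - normSq (w y)) ^ 2 / (2 * ε ^ 2)) z
          + tdt (fun y => tcurl B y ^ 2) z) := by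
  have hB' := hB.differentiableAt two_ne_zero
  have h1 := differentiableAt_normSq (differentiableAt_tcpd1 hw hB')
  have h2 := differentiableAt_normSq (differentiableAt_tcpd2 hw hB')
  have hwell := (hasFDerivAt_doubleWell (hw.differentiableAt two_ne_zero) ε).differentiableAt
  have hcurl := (differentiableAt_tcurl hB).pow 2
  have henergy : HasFDerivAt (tglEnergy ε w B) _ z :=
    (((h1.hasFDerivAt.add h2.hasFDerivAt).add hwell.hasFDerivAt).add
      hcurl.hasFDerivAt).const_mul (1 / 2)
  rw [tdt, henergy.fderiv]
  rfl

theorem energy_density_evolution_general {ε : ℝ} (_hε : ε ≠ 0) (hw : ContDiffAt ℝ 2 w z)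
    (hB : ContDiffAt ℝ 2 B z) (hξ : ContDiffAt ℝ 2 ξ z) :
    tdt (tglEnergy ε w B) z
      = tdiv (fun y => ripv (covt ξ w y) (tcovGrad B w y)) z
        + tcurl (fun y => tcurl B y • (tdt B y + tgrad ξ y)) z
        - rip (covt ξ w z)
            (tcovLap B w z + w z / (ε ^ 2 : ℂ) * (1 - (normSq (w z) : ℂ)))
        - rdot (tdt B z + tgrad ξ z)
            (tgradPerp (tcurl B) z + ripv (I * w z) (tcovGrad B w z)) := by
  rw [tdt_tglEnergy hw hB, tdt_doubleWell (hw.differentiableAt two_ne_zero) ε ξ,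
    tdt_normSq_tcpd1_add_tdt_normSq_tcpd2 hw (hB.differentiableAt two_ne_zero)
      (hξ.differentiableAt two_ne_zero), tdt_tcurl_sq hB hξ, rip_add_right, rdot_add_right]
  ring

end SpaceTime

/-- evolution of the Ginzburg–Landau energy density for an arbitrary
smooth triple `(w,B,ξ)`:
`∂_t g⁰_ε(w,B) = div(∂_ξ w, ∇_B w) + curl((curl B)(∂_t B + ∇ξ))`
`− (∂_ξ w, Δ_B w + (w/ε²)(1−|w|²)) − (∂_t B + ∇ξ)·(∇^⊥ curl B + (iw, ∇_B w))`. -/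
theorem energy_density_evolution
    (Ω : Set (ℝ × ℝ)) (hΩ : IsOpen Ω) (ε : ℝ) (hε : 0 < ε)
    (w : (ℝ × ℝ) × ℝ → ℂ) (B : (ℝ × ℝ) × ℝ → ℝ × ℝ) (ξ : (ℝ × ℝ) × ℝ → ℝ)
    (hw : ContDiffOn ℝ (⊤ : ℕ∞) w (Ω ×ˢ (Set.univ : Set ℝ)))
    (hB : ContDiffOn ℝ (⊤ : ℕ∞) B (Ω ×ˢ (Set.univ : Set ℝ)))
    (hξ : ContDiffOn ℝ (⊤ : ℕ∞) ξ (Ω ×ˢ (Set.univ : Set ℝ))) :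
    ∀ x ∈ Ω, ∀ t : ℝ,
      tdt (tglEnergy ε w B) (x, t)
        = tdiv (fun y => ripv (covt ξ w y) (tcovGrad B w y)) (x, t)
          + tcurl (fun y => (tcurl B y) • (tdt B y + tgrad ξ y)) (x, t)
          - rip (covt ξ w (x, t))
              (tcovLap B w (x, t)
                + w (x, t) / (ε ^ 2 : ℂ) * (1 - (Complex.normSq (w (x, t)) : ℂ)))
          - rdot (tdt B (x, t) + tgrad ξ (x, t))
              (tgradPerp (tcurl B) (x, t)
                + ripv (Complex.I * w (x, t)) (tcovGrad B w (x, t))) := by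
  intro x hx t
  have hnhds : Ω ×ˢ Set.univ ∈ nhds (x, t) := (hΩ.prod isOpen_univ).mem_nhds ⟨hx, Set.mem_univ t⟩
  have htwo : (2 : WithTop ℕ∞) ≤ (⊤ : ℕ∞) := WithTop.coe_le_coe.2 le_top
  exact energy_density_evolution_general hε.ne' ((hw.contDiffAt hnhds).of_le htwo)
    ((hB.contDiffAt hnhds).of_le htwo) ((hξ.contDiffAt hnhds).of_le htwo)

end
end

section
/- Let Ω ⊆ ℝ² be open and let w : Ω × ℝ → ℂ, B : Ω × ℝ → ℝ², ξ : Ω × ℝ → ℝ be smooth (not necessarily solutions of any equation). Then the conservation law ∂_t μ(w,B) + curl V(w,B,ξ) = 0 holds pointwise on Ω × ℝ, where curl V := ∂₁V₂ − ∂₂V₁. -/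
noncomputable section

open Complex

/-!
Encode `B` and `ξ` in the space-time connection form `A = B₁ dx₁ + B₂ dx₂ - ξ dt`, and consider the
1-form `α = (iw, dw - iAw) + A` on `ℝ² × ℝ`. The components of `dα` are the vorticity
`dα(∂₁, ∂₂) = μ(w, B)` and the velocity `dα(∂ₖ, ∂ₜ) = Vₖ(w, B, ξ)`, so the conservation law is
`d(dα)(∂₁, ∂₂, ∂ₜ) = 0`. Although `α` is only `C¹` when `w` is `C²`, it is the pullback under the
`C²` map `z ↦ (w(z), A(z), z)` of a smooth 1-form, and `d` commutes with such pullbacks.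
-/

open Filter Topology ContinuousAlternatingMap

section ExteriorDerivative

variable {𝕜 E F G : Type*} [RCLike 𝕜] [NormedAddCommGroup E] [NormedSpace 𝕜 E]
  [NormedAddCommGroup F] [NormedSpace 𝕜 F] [NormedAddCommGroup G] [NormedSpace 𝕜 G]

theorem extDeriv_one_form_apply {α : E → E [⋀^Fin 1]→L[𝕜] F} {x : E}
    (hα : DifferentiableAt 𝕜 α x) (a b : E) :
    extDeriv α x ![a, b] =
      fderiv 𝕜 (fun y => α y ![b]) x a - fderiv 𝕜 (fun y => α y ![a]) x b := by
  have remove_zero : Fin.removeNth 0 ![a, b] = ![b] := by ext i; fin_cases i; rfl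
  have remove_one : Fin.removeNth 1 ![a, b] = ![a] := by ext i; fin_cases i; rfl
  simp [extDeriv_apply hα, Fin.sum_univ_two, remove_zero, remove_one, sub_eq_add_neg]

theorem extDeriv_two_form_apply {ω : E → E [⋀^Fin 2]→L[𝕜] F} {x : E}
    (hω : DifferentiableAt 𝕜 ω x) (a b c : E) :
    extDeriv ω x ![a, b, c] =
      fderiv 𝕜 (fun y => ω y ![b, c]) x a - fderiv 𝕜 (fun y => ω y ![a, c]) x b
        + fderiv 𝕜 (fun y => ω y ![a, b]) x c := by
  have remove_zero : Fin.removeNth 0 ![a, b, c] = ![b, c] := by ext i; fin_cases i <;> rfl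
  have remove_one : Fin.removeNth 1 ![a, b, c] = ![a, c] := by ext i; fin_cases i <;> rfl
  have remove_two : Fin.removeNth 2 ![a, b, c] = ![a, b] := by ext i; fin_cases i <;> rfl
  simp [extDeriv_apply hω, Fin.sum_univ_three, remove_zero, remove_one, remove_two,
    sub_eq_add_neg]

theorem differentiableAt_extDeriv {n : ℕ} {ω : E → E [⋀^Fin n]→L[𝕜] F} {x : E}
    (hω : ContDiffAt 𝕜 2 ω x) : DifferentiableAt 𝕜 (extDeriv ω) x :=
  (alternatizeUncurryFinCLM 𝕜 E F).differentiableAt.comp x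
    ((hω.fderiv_right (m := 1) (by norm_num)).differentiableAt one_ne_zero)

variable {n : ℕ} {ω : F → F [⋀^Fin n]→L[𝕜] G} {f : E → F} {x : E}

theorem extDeriv_pullback_eventuallyEq (hω : ContDiffAt 𝕜 2 ω (f x)) (hf : ContDiffAt 𝕜 2 f x) :
    extDeriv (fun y => (ω (f y)).compContinuousLinearMap (fderiv 𝕜 f y)) =ᶠ[𝓝 x]
      fun y => (extDeriv ω (f y)).compContinuousLinearMap (fderiv 𝕜 f y) := by
  filter_upwards [hf.continuousAt.eventually (hω.eventually (by simp)),
    hf.eventually (by simp)] with y hωy hfy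
  exact extDeriv_pullback (hωy.differentiableAt two_ne_zero) hfy (by simp)

theorem differentiableAt_extDeriv_pullback
    (hω : ContDiffAt 𝕜 2 ω (f x)) (hf : ContDiffAt 𝕜 2 f x) :
    DifferentiableAt 𝕜
      (extDeriv fun y => (ω (f y)).compContinuousLinearMap (fderiv 𝕜 f y)) x := by
  rw [(extDeriv_pullback_eventuallyEq hω hf).differentiableAt_iff]
  exact ((differentiableAt_extDeriv hω).comp x
    (hf.differentiableAt two_ne_zero)).continuousAlternatingMapCompContinuousLinearMap
    ((hf.fderiv_right (m := 1) (by norm_num)).differentiableAt one_ne_zero)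

theorem extDeriv_extDeriv_pullback (hω : ContDiffAt 𝕜 2 ω (f x)) (hf : ContDiffAt 𝕜 2 f x) :
    extDeriv (extDeriv fun y => (ω (f y)).compContinuousLinearMap (fderiv 𝕜 f y)) x = 0 := by
  rw [(extDeriv_pullback_eventuallyEq hω hf).extDeriv_eq,
    extDeriv_pullback (differentiableAt_extDeriv hω) hf (by simp),
    extDeriv_extDeriv_apply hω (by simp)]
  rfl

end ExteriorDerivative

section GaugeCurrent

variable {E : Type*} [NormedAddCommGroup E] [NormedSpace ℝ E]

/-- The gauge-invariant current `(iw, dw - iAw) + A` of a section `w` and a connection 1-form `A`,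
as a 1-form. It is written as `(iw, dw) + (1 - |w|²) A`, which is linear in `dw` and in `A`. -/
def gaugeCurrent (w : E → ℂ) (A : E → E →L[ℝ] ℝ) (z : E) : E [⋀^Fin 1]→L[ℝ] ℝ :=
  ofSubsingletonLIE 0
    (innerSL ℝ (I * w z) ∘L fderiv ℝ w z + (1 - ‖w z‖ ^ 2) • A z)

/-- The gauge current of the tautological section `(c, a, x) ↦ c` and the tautological connection
`(ċ, ȧ, ẋ) ↦ a ẋ` on `ℂ × E* × E`: every gauge current on `E` is a pullback of it. -/
def universalCurrent (E : Type*) [NormedAddCommGroup E] [NormedSpace ℝ E] :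
    ℂ × (E →L[ℝ] ℝ) × E → (ℂ × (E →L[ℝ] ℝ) × E) [⋀^Fin 1]→L[ℝ] ℝ :=
  gaugeCurrent Prod.fst fun p =>
    p.2.1 ∘L ContinuousLinearMap.snd ℝ (E →L[ℝ] ℝ) E ∘L ContinuousLinearMap.snd ℝ ℂ _

variable {w : E → ℂ} {A : E → E →L[ℝ] ℝ} {z : E}

theorem gaugeCurrent_apply (w : E → ℂ) (A : E → E →L[ℝ] ℝ) (z v : E) :
    gaugeCurrent w A z ![v] =
      rip (I * w z) (fderiv ℝ w z v - I * (A z v : ℂ) * w z) + A z v := by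
  have norm_sq : ‖w z‖ ^ 2 = (w z).re ^ 2 + (w z).im ^ 2 := by
    rw [← normSq_eq_norm_sq, normSq_apply]; ring
  change inner ℝ (I * w z) (fderiv ℝ w z v) + (1 - ‖w z‖ ^ 2) * A z v = _
  simp only [norm_sq, Complex.inner, rip, map_mul, conj_I, mul_re, mul_im, sub_re, sub_im, neg_re,
    neg_im, conj_re, conj_im, I_re, I_im, ofReal_re, ofReal_im]
  ring

theorem contDiffAt_gaugeCurrent {m n : WithTop ℕ∞} (hw : ContDiffAt ℝ m w z)
    (hA : ContDiffAt ℝ n A z) (hmn : n + 1 ≤ m) : ContDiffAt ℝ n (gaugeCurrent w A) z := by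
  have hw' : ContDiffAt ℝ n w z := hw.of_le (le_self_add.trans hmn)
  have h_dw : ContDiffAt ℝ n (fderiv ℝ w) z := hw.fderiv_right hmn
  have h_inner : ContDiffAt ℝ n (fun y => innerSL ℝ (I * w y)) z :=
    (innerSL ℝ (E := ℂ)).contDiff.comp_contDiffAt z (contDiffAt_const.mul hw')
  have h_norm : ContDiffAt ℝ n (fun y => ‖w y‖ ^ 2) z := hw'.norm_sq ℝ
  exact (ofSubsingletonLIE (𝕜 := ℝ) (E := E) (F := ℝ) (0 : Fin 1)).contDiff.comp_contDiffAt z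
    ((h_inner.clm_comp h_dw).add ((contDiffAt_const.sub h_norm).smul hA))

theorem contDiff_universalCurrent {n : WithTop ℕ∞} : ContDiff ℝ n (universalCurrent E) :=
  contDiff_iff_contDiffAt.2 fun _ =>
    contDiffAt_gaugeCurrent contDiffAt_fst (by fun_prop) le_rfl

theorem gaugeCurrent_eq_pullback (hw : DifferentiableAt ℝ w z) (hA : DifferentiableAt ℝ A z) :
    gaugeCurrent w A z = (universalCurrent E (w z, A z, z)).compContinuousLinearMap
      (fderiv ℝ (fun y => (w y, A y, y)) z) := by
  have hf : fderiv ℝ (fun y => (w y, A y, y)) z =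
      (fderiv ℝ w z).prod ((fderiv ℝ A z).prod (.id ℝ E)) :=
    (hw.hasFDerivAt.prodMk (hA.hasFDerivAt.prodMk (hasFDerivAt_id z))).fderiv
  ext v
  rw [hf]
  simp [universalCurrent, gaugeCurrent, fderiv_fst]

theorem gaugeCurrent_eventuallyEq_pullback
    (hw : ContDiffAt ℝ 2 w z) (hA : ContDiffAt ℝ 2 A z) :
    gaugeCurrent w A =ᶠ[𝓝 z] fun y => (universalCurrent E (w y, A y, y)).compContinuousLinearMap
      (fderiv ℝ (fun y => (w y, A y, y)) y) := by
  filter_upwards [hw.eventually (by simp), hA.eventually (by simp)] with y hwy hAy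
  exact gaugeCurrent_eq_pullback (hwy.differentiableAt two_ne_zero)
    (hAy.differentiableAt two_ne_zero)

theorem differentiableAt_extDeriv_gaugeCurrent
    (hw : ContDiffAt ℝ 2 w z) (hA : ContDiffAt ℝ 2 A z) :
    DifferentiableAt ℝ (extDeriv (gaugeCurrent w A)) z := by
  rw [(gaugeCurrent_eventuallyEq_pullback hw hA).extDeriv.differentiableAt_iff]
  exact differentiableAt_extDeriv_pullback contDiff_universalCurrent.contDiffAt
    (hw.prodMk (hA.prodMk contDiffAt_id))

theorem extDeriv_extDeriv_gaugeCurrent (hw : ContDiffAt ℝ 2 w z) (hA : ContDiffAt ℝ 2 A z) :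
    extDeriv (extDeriv (gaugeCurrent w A)) z = 0 := by
  rw [(gaugeCurrent_eventuallyEq_pullback hw hA).extDeriv.extDeriv_eq]
  exact extDeriv_extDeriv_pullback contDiff_universalCurrent.contDiffAt
    (hw.prodMk (hA.prodMk contDiffAt_id))

end GaugeCurrent

section Spacetime

local notation "e₁" => (((1, 0), 0) : (ℝ × ℝ) × ℝ)
local notation "e₂" => (((0, 1), 0) : (ℝ × ℝ) × ℝ)
local notation "eₜ" => (((0, 0), 1) : (ℝ × ℝ) × ℝ)

/-- The connection 1-form `B₁ dx₁ + B₂ dx₂ - ξ dt` on space-time; the sign of `ξ` makes its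
covariant time derivative `∂ₜ + iξ`. -/
def spacetimeConnection (B : (ℝ × ℝ) × ℝ → ℝ × ℝ) (ξ : (ℝ × ℝ) × ℝ → ℝ) (z : (ℝ × ℝ) × ℝ) :
    (ℝ × ℝ) × ℝ →L[ℝ] ℝ :=
  ((B z).1 • ContinuousLinearMap.fst ℝ ℝ ℝ + (B z).2 • ContinuousLinearMap.snd ℝ ℝ ℝ) ∘L
    ContinuousLinearMap.fst ℝ (ℝ × ℝ) ℝ - ξ z • ContinuousLinearMap.snd ℝ (ℝ × ℝ) ℝ

variable {w : (ℝ × ℝ) × ℝ → ℂ} {B X : (ℝ × ℝ) × ℝ → ℝ × ℝ} {ξ : (ℝ × ℝ) × ℝ → ℝ}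
  {z : (ℝ × ℝ) × ℝ}

theorem contDiffAt_spacetimeConnection {n : WithTop ℕ∞}
    (hB : ContDiffAt ℝ n B z) (hξ : ContDiffAt ℝ n ξ z) :
    ContDiffAt ℝ n (spacetimeConnection B ξ) z := by
  unfold spacetimeConnection
  fun_prop

theorem ripv_tcovGrad_add_eq_gaugeCurrent (w : (ℝ × ℝ) × ℝ → ℂ)
    (B : (ℝ × ℝ) × ℝ → ℝ × ℝ) (ξ : (ℝ × ℝ) × ℝ → ℝ) (z : (ℝ × ℝ) × ℝ) :
    ripv (I * w z) (tcovGrad B w z) + B z =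
      (gaugeCurrent w (spacetimeConnection B ξ) z ![e₁],
        gaugeCurrent w (spacetimeConnection B ξ) z ![e₂]) := by
  simp [gaugeCurrent_apply, spacetimeConnection, ripv, tcovGrad, tcpd1, tcpd2, sp1, sp2,
    Prod.ext_iff]

theorem rip_covt_sub_eq_gaugeCurrent (w : (ℝ × ℝ) × ℝ → ℂ)
    (B : (ℝ × ℝ) × ℝ → ℝ × ℝ) (ξ : (ℝ × ℝ) × ℝ → ℝ) (z : (ℝ × ℝ) × ℝ) :
    rip (I * w z) (covt ξ w z) - ξ z = gaugeCurrent w (spacetimeConnection B ξ) z ![eₜ] := by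
  simp [gaugeCurrent_apply, spacetimeConnection, covt, tdt, sub_eq_add_neg]

theorem tcurl_eq (hX : DifferentiableAt ℝ X z) :
    tcurl X z = sp1 (fun y => (X y).2) z - sp2 (fun y => (X y).1) z := by
  simp [tcurl, sp1, sp2, fderiv.fst hX, fderiv.snd hX]

theorem tvort_eq_extDeriv_gaugeCurrent
    (hα : DifferentiableAt ℝ (gaugeCurrent w (spacetimeConnection B ξ)) z) :
    tvort w B z = extDeriv (gaugeCurrent w (spacetimeConnection B ξ)) z ![e₁, e₂] := by
  simp only [tvort, ripv_tcovGrad_add_eq_gaugeCurrent w B ξ]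
  rw [extDeriv_one_form_apply hα, tcurl_eq (.prodMk
    (hα.continuousAlternatingMap_apply_const _) (hα.continuousAlternatingMap_apply_const _))]
  rfl

theorem tvel_eq_extDeriv_gaugeCurrent
    (hα : DifferentiableAt ℝ (gaugeCurrent w (spacetimeConnection B ξ)) z)
    (hB : DifferentiableAt ℝ B z) (hξ : DifferentiableAt ℝ ξ z) :
    tvel w B ξ z =
      (extDeriv (gaugeCurrent w (spacetimeConnection B ξ)) z ![e₁, eₜ],
        extDeriv (gaugeCurrent w (spacetimeConnection B ξ)) z ![e₂, eₜ]) := by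
  have spatial (y) := eq_sub_of_add_eq (ripv_tcovGrad_add_eq_gaugeCurrent w B ξ y)
  have time (y) := sub_eq_iff_eq_add.mp (rip_covt_sub_eq_gaugeCurrent w B ξ y)
  have hα' (v) : DifferentiableAt ℝ (fun y => gaugeCurrent w (spacetimeConnection B ξ) y ![v]) z :=
    hα.continuousAlternatingMap_apply_const _
  simp only [tvel, spatial, time, extDeriv_one_form_apply hα, tgrad, sp1, sp2, tdt]
  rw [fderiv_fun_add (hα' _) hξ, fderiv_fun_sub ((hα' _).prodMk (hα' _)) hB,
    (hα' _).fderiv_prodMk (hα' _)]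
  ext
  · simp only [_root_.add_apply, _root_.sub_apply, ContinuousLinearMap.prod_apply, Prod.fst_sub,
      Prod.fst_add]
    ring
  · simp only [_root_.add_apply, _root_.sub_apply, ContinuousLinearMap.prod_apply, Prod.snd_sub,
      Prod.snd_add]
    ring

theorem vorticity_conservation_law_general
    (hw : ContDiffAt ℝ 2 w z) (hB : ContDiffAt ℝ 2 B z) (hξ : ContDiffAt ℝ 2 ξ z) :
    tdt (tvort w B) z + tcurl (tvel w B ξ) z = 0 := by
  set α := gaugeCurrent w (spacetimeConnection B ξ)
  have hA : ContDiffAt ℝ 2 (spacetimeConnection B ξ) z := contDiffAt_spacetimeConnection hB hξ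
  have hα : ∀ᶠ y in 𝓝 z, DifferentiableAt ℝ α y :=
    ((contDiffAt_gaugeCurrent hw (hA.of_le one_le_two) one_add_one_eq_two.le).eventually
      (by simp)).mono fun _ hαy => hαy.differentiableAt one_ne_zero
  have vort : tvort w B =ᶠ[𝓝 z] fun y => extDeriv α y ![e₁, e₂] :=
    hα.mono fun _ => tvort_eq_extDeriv_gaugeCurrent
  have vel : tvel w B ξ =ᶠ[𝓝 z] fun y => (extDeriv α y ![e₁, eₜ], extDeriv α y ![e₂, eₜ]) := by
    filter_upwards [hα, hB.eventually (by simp), hξ.eventually (by simp)] with y hαy hBy hξy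
    exact tvel_eq_extDeriv_gaugeCurrent hαy (hBy.differentiableAt two_ne_zero)
      (hξy.differentiableAt two_ne_zero)
  have hdα : DifferentiableAt ℝ (extDeriv α) z := differentiableAt_extDeriv_gaugeCurrent hw hA
  have hdα' (a b) : DifferentiableAt ℝ (fun y => extDeriv α y ![a, b]) z :=
    hdα.continuousAlternatingMap_apply_const _
  have closed : extDeriv (extDeriv α) z ![e₁, e₂, eₜ] = 0 := by
    simp [α, extDeriv_extDeriv_gaugeCurrent hw hA]
  rw [extDeriv_two_form_apply hdα] at closed
  rw [tdt, tcurl, sp1, sp2, vort.fderiv_eq, vel.fderiv_eq, (hdα' _ _).fderiv_prodMk (hdα' _ _)]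
  simpa [add_comm, sub_eq_add_neg] using closed

end Spacetime

/-- conservation law `∂_t μ(w,B) + curl V(w,B,ξ) = 0` pointwise on `Ω × ℝ`. -/
theorem vorticity_conservation_law
    (Ω : Set (ℝ × ℝ)) (hΩ : IsOpen Ω)
    (w : (ℝ × ℝ) × ℝ → ℂ) (B : (ℝ × ℝ) × ℝ → ℝ × ℝ) (ξ : (ℝ × ℝ) × ℝ → ℝ)
    (hw : ContDiffOn ℝ (⊤ : ℕ∞) w (Ω ×ˢ (Set.univ : Set ℝ)))
    (hB : ContDiffOn ℝ (⊤ : ℕ∞) B (Ω ×ˢ (Set.univ : Set ℝ)))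
    (hξ : ContDiffOn ℝ (⊤ : ℕ∞) ξ (Ω ×ˢ (Set.univ : Set ℝ))) :
    ∀ x ∈ Ω, ∀ t : ℝ,
      tdt (tvort w B) (x, t) + tcurl (tvel w B ξ) (x, t) = 0 := by
  intro x hx t
  have hΩt : Ω ×ˢ (Set.univ : Set ℝ) ∈ 𝓝 (x, t) := prod_mem_nhds (hΩ.mem_nhds hx) univ_mem
  have smooth : (2 : WithTop ℕ∞) ≤ (⊤ : ℕ∞) := by norm_cast
  exact vorticity_conservation_law_general ((hw.contDiffAt hΩt).of_le smooth)
    ((hB.contDiffAt hΩt).of_le smooth) ((hξ.contDiffAt hΩt).of_le smooth)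

end
end
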